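/- Let R be a Gorenstein Noetherian local ring with dim R > 0 and let 𝒳 be a resolving subcategory of the category of finitely generated R-modules all of whose members are maximal Cohen–Macaulay. Then 𝒳 is not contravariantly infinite: there exists a finitely generated R-module outside 𝒳 (namely R/(x) for any R-regular element x ∈ 𝔪) which admits a right 𝒳-approximation. -/

import Mathlib

open CategoryTheory IsLocalRing

universe u

noncomputable section

/-- The `i`-th Ext module of two `R`-modules. -/
abbrev ExtMod (R : Type u) [CommRing R] (i : ℕ) (M N : ModuleCat.{u} R) : ModuleCat R :=
  ((Ext R (ModuleCat.{u} R) i).obj (Opposite.op M)).obj N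

/-- Vanishing of the `i`-th Ext module: `Ext_R^i(M, N) = 0`. -/
def ExtVanish (R : Type u) [CommRing R] (i : ℕ) (M N : ModuleCat.{u} R) : Prop :=
  Subsingleton (ExtMod R i M N)

variable (R : Type u) [CommRing R]

/-- `0 → A → B → C → 0` is a short exact sequence. -/
def IsSES {A B C : ModuleCat.{u} R} (f : A →ₗ[R] B) (g : B →ₗ[R] C) : Prop :=
  Function.Injective f ∧ Function.Exact f g ∧ Function.Surjective g

/-- A resolving subcategory of the category of finitely generated `R`-modules. -/
structure IsResolving (𝒳 : Set (ModuleCat.{u} R)) : Prop where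
  finite : ∀ M ∈ 𝒳, Module.Finite R M
  isoClosed : ∀ {M N : ModuleCat.{u} R}, M ∈ 𝒳 → (↥M ≃ₗ[R] ↥N) → N ∈ 𝒳
  freeMem : ∀ M : ModuleCat.{u} R, Module.Finite R M → Module.Free R M → M ∈ 𝒳
  summandClosed : ∀ M N : ModuleCat.{u} R, ModuleCat.of R (↥M × ↥N) ∈ 𝒳 → M ∈ 𝒳
  extClosed : ∀ (A B C : ModuleCat.{u} R) (f : A →ₗ[R] B) (g : B →ₗ[R] C),
    IsSES R f g → A ∈ 𝒳 → C ∈ 𝒳 → B ∈ 𝒳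
  kerClosed : ∀ (A B C : ModuleCat.{u} R) (f : A →ₗ[R] B) (g : B →ₗ[R] C),
    IsSES R f g → B ∈ 𝒳 → C ∈ 𝒳 → A ∈ 𝒳

/-- `f : X → M` is a right `𝒳`-approximation of `M`. -/
def IsRightApprox (𝒳 : Set (ModuleCat.{u} R)) {X M : ModuleCat.{u} R} (f : X →ₗ[R] M) : Prop :=
  X ∈ 𝒳 ∧ ∀ W ∈ 𝒳, ∀ g : ↥W →ₗ[R] ↥M, ∃ h : ↥W →ₗ[R] ↥X, f ∘ₗ h = g

/-- `M` admits a right `𝒳`-approximation. -/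
def HasRightApprox (𝒳 : Set (ModuleCat.{u} R)) (M : ModuleCat.{u} R) : Prop :=
  ∃ (X : ModuleCat.{u} R) (f : X →ₗ[R] M), IsRightApprox R 𝒳 f

/-- `𝒳` is contravariantly infinite: no finitely generated module outside `𝒳` admits
a right `𝒳`-approximation. -/
def ContravariantlyInfinite (𝒳 : Set (ModuleCat.{u} R)) : Prop :=
  ∀ M : ModuleCat.{u} R, Module.Finite R M → M ∉ 𝒳 → ¬ HasRightApprox R 𝒳 M

/-- `𝒳` is contravariantly finite: every finitely generated module admits
a right `𝒳`-approximation. -/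
def ContravariantlyFinite (𝒳 : Set (ModuleCat.{u} R)) : Prop :=
  ∀ M : ModuleCat.{u} R, Module.Finite R M → HasRightApprox R 𝒳 M

/-- The restricted functor `Hom_R(-, C)|_𝒳` is finitely presented, i.e. `C ∈ 𝒞(𝒳)`. -/
def MemCC (𝒳 : Set (ModuleCat.{u} R)) (C : ModuleCat.{u} R) : Prop :=
  ∃ (X₀ X₁ : ModuleCat.{u} R) (g : ↥X₁ →ₗ[R] ↥X₀) (f : ↥X₀ →ₗ[R] ↥C), X₀ ∈ 𝒳 ∧ X₁ ∈ 𝒳 ∧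
    ∀ W ∈ 𝒳, Function.Surjective (fun h : ↥W →ₗ[R] ↥X₀ => f ∘ₗ h) ∧
      Function.Exact (fun h : ↥W →ₗ[R] ↥X₁ => g ∘ₗ h) (fun h : ↥W →ₗ[R] ↥X₀ => f ∘ₗ h)

/-- `𝒳` is coherent: `𝒞(𝒳) = rap 𝒳`. -/
def Coherent (𝒳 : Set (ModuleCat.{u} R)) : Prop :=
  ∀ M : ModuleCat.{u} R, Module.Finite R M → (MemCC R 𝒳 M ↔ HasRightApprox R 𝒳 M)

/-- The right Ext-orthogonal class `𝒳^⊥` of a class `𝒳` of finitely generated modules. -/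
def XPerp (𝒳 : Set (ModuleCat.{u} R)) : Set (ModuleCat.{u} R) :=
  {Y | Module.Finite R Y ∧ ∀ X ∈ 𝒳, ∀ i, 0 < i → ExtVanish R i X Y}

/-- The projective dimension of `M` is at most `n`. -/
def ProjDimLE (M : ModuleCat.{u} R) (n : ℕ) : Prop :=
  ∀ N : ModuleCat.{u} R, ∀ i, n < i → ExtVanish R i M N

/-- The depth of an `R`-module over a local ring: `inf { i | Ext^i(k, M) ≠ 0 }`. -/
def moduleDepth [IsLocalRing R] (M : ModuleCat.{u} R) : ℕ∞ :=
  sInf ((fun i : ℕ => (i : ℕ∞)) ''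
    {i : ℕ | ¬ ExtVanish R i (ModuleCat.of R (ResidueField R)) M})

/-- `M` is a maximal Cohen–Macaulay `R`-module: `depth M ≥ dim R`. -/
def IsMCM [IsLocalRing R] (M : ModuleCat.{u} R) : Prop :=
  ringKrullDim R ≤ (moduleDepth R M : WithBot ℕ∞)

/-- A Gorenstein local ring: `∃ n, Ext^i(M, R) = 0` for every finitely generated `M`
and every `i > n`. -/
def IsGorensteinLocalRing : Prop :=
  ∃ n : ℕ, ∀ M : ModuleCat.{u} R, Module.Finite R M →
    ∀ i, n < i → ExtVanish R i M (ModuleCat.of R R)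

/-- A regular local ring: Noetherian local with `dim R = dim_k 𝔪/𝔪²`. -/
def IsRegularLocal [IsLocalRing R] : Prop :=
  IsNoetherianRing R ∧
    ringKrullDim R = (Module.finrank (ResidueField R) (CotangentSpace R) : ℕ)

/-- Witness that the local ring `R` is a complete intersection: its `𝔪`-adic completion
is `Q/(f₁, …, f_c)` for a regular local ring `Q` and a `Q`-regular sequence `f₁, …, f_c`. -/
structure CompleteIntersectionWitness [IsLocalRing R] : Type (u + 1) where
  Q : Type u
  [commRing : CommRing Q]
  [localRing : IsLocalRing Q]
  regular : IsRegularLocal Q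
  fs : List Q
  regSeq : RingTheory.Sequence.IsRegular Q fs
  equiv : AdicCompletion (maximalIdeal R) R ≃+* Q ⧸ Ideal.span {x : Q | x ∈ fs}

/-- The local ring `R` is a complete intersection. -/
def IsCompleteIntersection [IsLocalRing R] : Prop :=
  Nonempty (CompleteIntersectionWitness R)

end


theorem bridge (R : Type u) [CommRing R] (i : ℕ) (M N : ModuleCat.{u} R) :
    ExtVanish R i M N ↔ Subsingleton (Abelian.Ext.{u} M N i) := by
  let P := projectiveResolution M
  have h1 : ExtVanish R i M N ↔ (P.complex.linearYonedaObj R N).ExactAt i := by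
    rw [HomologicalComplex.exactAt_iff_isZero_homology,
      ← (P.isoExt (R := R) i N).isZero_iff, ExtVanish, ModuleCat.isZero_iff_subsingleton]
  rw [h1]
  cases i with
  | zero =>
    rw [HomologicalComplex.exactAt_iff' _ 0 0 1 (by simp) (by simp),
      ShortComplex.moduleCat_exact_iff, Abelian.Ext.addEquiv₀.subsingleton_congr]
    constructor
    · intro h
      refine subsingleton_of_forall_eq 0 fun f => ?_
      obtain ⟨y, hy⟩ := h (P.π.f 0 ≫ f) (by
        change P.complex.d 1 0 ≫ P.π.f 0 ≫ f = 0
        have := P.complex_d_comp_π_f_zero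
        erw [← Category.assoc, this]; exact Limits.zero_comp)
      have hy' : P.complex.d 0 0 ≫ y = P.π.f 0 ≫ f := hy
      rw [P.complex.shape 0 0 (by simp)] at hy'
      have hy2 : (0 : P.complex.X 0 ⟶ N) = P.π.f 0 ≫ f := Limits.zero_comp.symm.trans hy'
      exact (cancel_epi (P.π.f 0)).1 (hy2.symm.trans Limits.comp_zero.symm)
    · intro h f hf
      refine ⟨0, ?_⟩
      have hf' : P.complex.d 1 0 ≫ f = 0 := hf
      let g := P.exact₀.desc f hf'
      have hg : P.π.f 0 ≫ g = f := P.exact₀.g_desc f hf'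
      have : g = 0 := @Subsingleton.elim _ h _ _
      rw [map_zero, ← hg, this]
      exact (Limits.comp_zero).symm
  | succ n =>
    rw [HomologicalComplex.exactAt_iff' _ n (n+1) (n+2) (by simp) (by simp),
      ShortComplex.moduleCat_exact_iff]
    constructor
    · intro h
      refine subsingleton_of_forall_eq 0 fun a => ?_
      obtain ⟨f, hf, rfl⟩ := P.extMk_surjective a (n+2) rfl
      rw [P.extMk_eq_zero_iff f _ rfl hf n rfl]
      exact h f hf
    · intro h f hf
      exact (P.extMk_eq_zero_iff f (n+2) rfl hf n rfl).1 (Subsingleton.elim _ _)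

section helpers

open Abelian Module Pointwise

variable {R : Type u} [CommRing R]

theorem cov3 {S : ShortComplex (ModuleCat.{u} R)} (hS : S.ShortExact) (X : ModuleCat.{u} R) (i : ℕ)
    (h2 : Subsingleton (Ext.{u} X S.X₂ i)) (h1 : Subsingleton (Ext.{u} X S.X₁ (i+1))) :
    Subsingleton (Ext.{u} X S.X₃ i) := by
  refine subsingleton_of_forall_eq 0 fun a => ?_
  obtain ⟨b, rfl⟩ := Ext.covariant_sequence_exact₃ X hS a rfl (Subsingleton.elim _ _)
  rw [Subsingleton.elim b 0, Ext.zero_comp]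

theorem ctr1 {S : ShortComplex (ModuleCat.{u} R)} (hS : S.ShortExact) (Y : ModuleCat.{u} R) (i : ℕ)
    (h2 : Subsingleton (Ext.{u} S.X₂ Y i)) (h3 : Subsingleton (Ext.{u} S.X₃ Y (i+1))) :
    Subsingleton (Ext.{u} S.X₁ Y i) := by
  refine subsingleton_of_forall_eq 0 fun a => ?_
  obtain ⟨b, rfl⟩ := Ext.contravariant_sequence_exact₁ hS Y a (add_comm 1 i) (Subsingleton.elim _ _)
  rw [Subsingleton.elim b 0, Ext.comp_zero]

theorem ctr2 {S : ShortComplex (ModuleCat.{u} R)} (hS : S.ShortExact) (Y : ModuleCat.{u} R) (i : ℕ)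
    (h1 : Subsingleton (Ext.{u} S.X₁ Y i)) (h3 : Subsingleton (Ext.{u} S.X₃ Y i)) :
    Subsingleton (Ext.{u} S.X₂ Y i) := by
  refine subsingleton_of_forall_eq 0 fun a => ?_
  obtain ⟨b, rfl⟩ := Ext.contravariant_sequence_exact₂ hS Y a (Subsingleton.elim _ _)
  rw [Subsingleton.elim b 0, Ext.comp_zero]

theorem ctr3 {S : ShortComplex (ModuleCat.{u} R)} (hS : S.ShortExact) (Y : ModuleCat.{u} R) (i : ℕ)
    (h1 : Subsingleton (Ext.{u} S.X₁ Y i)) (h2 : Subsingleton (Ext.{u} S.X₂ Y (i+1))) :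
    Subsingleton (Ext.{u} S.X₃ Y (i+1)) := by
  refine subsingleton_of_forall_eq 0 fun a => ?_
  obtain ⟨b, rfl⟩ := Ext.contravariant_sequence_exact₃ hS Y a (Subsingleton.elim _ _) (add_comm 1 i)
  rw [Subsingleton.elim b 0, Ext.comp_zero]

theorem ctr30 {S : ShortComplex (ModuleCat.{u} R)} (hS : S.ShortExact) (Y : ModuleCat.{u} R)
    (h2 : Subsingleton (Ext.{u} S.X₂ Y 0)) :
    Subsingleton (Ext.{u} S.X₃ Y 0) := by
  have := hS.epi_g
  have := Ext.precomp_mk₀_injective_of_epi Y S.g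
  exact this.subsingleton

theorem ses {A B C : Type u} [AddCommGroup A] [AddCommGroup B] [AddCommGroup C]
    [Module R A] [Module R B] [Module R C] (f : A →ₗ[R] B) (g : B →ₗ[R] C)
    (hf : Function.Injective f) (hg : Function.Surjective g) (h : Function.Exact f g) :
    (ModuleCat.shortComplexOfCompEqZero f g h.linearMap_comp_eq_zero).ShortExact where
  exact := ModuleCat.shortComplex_exact _ h
  mono_f := by simpa [ModuleCat.mono_iff_injective] using! hf
  epi_g := by simpa [ModuleCat.epi_iff_surjective] using! hg

variable [IsNoetherianRing R] [IsLocalRing R]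

theorem exists_reg (M : ModuleCat.{u} R) [Module.Finite R M]
    (h : Subsingleton (Ext.{u} (ModuleCat.of R (ResidueField R)) M 0)) :
    ∃ x ∈ maximalIdeal R, IsSMulRegular M x := by
  have : Subsingleton (ModuleCat.of R (ResidueField R) ⟶ M) :=
    Ext.addEquiv₀.subsingleton_congr.mp h
  have : Subsingleton (ResidueField R →ₗ[R] M) :=
    (ModuleCat.homAddEquiv (M := ModuleCat.of R (ResidueField R))).symm.subsingleton
  obtain ⟨x, mem_ann, hx⟩ := IsSMulRegular.subsingleton_linearMap_iff.mp this
  refine ⟨x, ?_, hx⟩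
  have e : annihilator R (ResidueField R) = maximalIdeal R := Ideal.annihilator_quotient
  rwa [e] at mem_ann

theorem depth_le (M : ModuleCat.{u} R) [Module.Finite R M] [Nontrivial M] (n : ℕ)
    (h : ∀ i < n, Subsingleton (Ext.{u} (ModuleCat.of R (ResidueField R)) M i)) :
    (n : WithBot ℕ∞) ≤ supportDim R M := by
  have lt : maximalIdeal R • (⊤ : Submodule R M) < ⊤ := by
    rw [lt_top_iff_ne_top]
    intro h
    have := Submodule.eq_bot_of_eq_ideal_smul_of_le_jacobson_annihilator (N := (⊤ : Submodule R M))
      (I := maximalIdeal R) Module.Finite.fg_top h.symm (maximalIdeal_le_jacobson _)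
    exact top_ne_bot this
  have e : annihilator R (ResidueField R) = maximalIdeal R := Ideal.annihilator_quotient
  have : Module.Finite R (ModuleCat.of R (ResidueField R)) :=
    inferInstanceAs (Module.Finite R (R ⧸ maximalIdeal R))
  obtain ⟨rs, hl, -, hr⟩ := ModuleCat.exists_isRegular_of_exists_subsingleton_ext
    (maximalIdeal R) n M lt (ModuleCat.of R (ResidueField R))
    (by rw [Module.support_eq_zeroLocus]; exact congrArg _ (congrArg _ e)) h
  rw [← supportDim_add_length_eq_supportDim_of_isRegular rs hr, hl]
  have : Nontrivial (M ⧸ Ideal.ofList rs • (⊤ : Submodule R M)) :=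
    Submodule.Quotient.nontrivial_iff.2 hr.2.symm
  have h0 := supportDim_ne_bot_of_nontrivial R (M ⧸ Ideal.ofList rs • (⊤ : Submodule R M))
  obtain ⟨a, ha⟩ := WithBot.ne_bot_iff_exists.1 h0
  rw [← ha]
  exact_mod_cast le_add_self

theorem naka (M N : ModuleCat.{u} R) [Module.Finite R M] [Module.Finite R N] (x : R)
    (hx : x ∈ maximalIdeal R) (reg : IsSMulRegular M x) (i : ℕ)
    (h : Subsingleton (Ext.{u} (ModuleCat.of R (QuotSMulTop x M)) N (i+1))) :
    Subsingleton (Ext.{u} M N i) := by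
  have hS := reg.smulShortComplex_shortExact
  by_contra ntr
  have : Nontrivial (Ext.{u} M N i) := not_subsingleton_iff_nontrivial.1 ntr
  have hj : x ∈ (Module.annihilator R (Ext.{u} M N i)).jacobson :=
    (IsLocalRing.maximalIdeal_le_jacobson _) hx
  apply Submodule.top_ne_pointwise_smul_of_mem_jacobson_annihilator hj
  rw [eq_comm, eq_top_iff]
  intro y hy
  obtain ⟨b, rfl⟩ := Ext.contravariant_sequence_exact₁ hS N y (add_comm 1 i)
    (@Subsingleton.elim _ h _ _)
  have key : ∀ b : Ext.{u} M N i, (Ext.mk₀ (x • 𝟙 M)).comp b (zero_add i) ∈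
      x • (⊤ : Submodule R (Ext.{u} M N i)) := by
    intro b
    rw [Ext.mk₀_smul, Ext.smul_comp, Ext.mk₀_id_comp]
    exact Submodule.smul_mem_pointwise_smul _ _ _ trivial
  exact key b

theorem emb (n : ℕ) (Y M : ModuleCat.{u} R) [Module.Finite R M]
    (hn : ∀ N : ModuleCat.{u} R, Module.Finite R N → Subsingleton (Ext.{u} N Y (n+1)))
    (hM : Subsingleton (Ext.{u} M Y n))
    (h0 : ¬ Subsingleton (Ext.{u} (ModuleCat.of R (ResidueField R)) M 0)) :
    Subsingleton (Ext.{u} (ModuleCat.of R (ResidueField R)) Y n) := by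
  have h1 : ¬ Subsingleton (ResidueField R →ₗ[R] M) := fun h => h0 <|
    Ext.addEquiv₀.subsingleton_congr.mpr
      (ModuleCat.homAddEquiv (M := ModuleCat.of R (ResidueField R))).subsingleton
  have : Nontrivial (ResidueField R →ₗ[R] M) := not_subsingleton_iff_nontrivial.1 h1
  obtain ⟨f, hf⟩ := exists_ne (0 : ResidueField R →ₗ[R] M)
  have : IsSimpleModule R (ResidueField R) :=
    isSimpleModule_iff_isCoatom.2 (Ideal.isMaximal_def.1 inferInstance)
  have hS := ses f (LinearMap.range f).mkQ (LinearMap.injective_of_ne_zero hf)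
    (Submodule.mkQ_surjective _) (LinearMap.exact_map_mkQ_range f)
  exact ctr1 hS Y n hM (hn (ModuleCat.of R (M ⧸ LinearMap.range f)) inferInstance)

theorem bassB (n : ℕ) (Y : ModuleCat.{u} R)
    (hn : ∀ N : ModuleCat.{u} R, Module.Finite R N → Subsingleton (Ext.{u} N Y (n+1)))
    (e : ℕ) : ∀ (M : ModuleCat.{u} R) [Module.Finite R M] [Nontrivial M],
    supportDim R M ≤ e → (∀ i, n ≤ i + e → Subsingleton (Ext.{u} M Y i)) →
    Subsingleton (Ext.{u} (ModuleCat.of R (ResidueField R)) Y n) := by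
  induction e with
  | zero =>
    intro M _ _ hd hM
    by_cases h0 : Subsingleton (Ext.{u} (ModuleCat.of R (ResidueField R)) M 0)
    · have := (depth_le M 1 (by intro i hi; obtain rfl : i = 0 := by omega
                                exact h0)).trans hd
      exact absurd this (by decide)
    · exact emb n Y M hn (hM n (by omega)) h0
  | succ e ih =>
    intro M _ _ hd hM
    by_cases h0 : Subsingleton (Ext.{u} (ModuleCat.of R (ResidueField R)) M 0)
    · obtain ⟨x, hx, reg⟩ := exists_reg M h0
      have hS := reg.smulShortComplex_shortExact
      have := nontrivial_quotSMulTop_of_mem_maximalIdeal M hx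
      refine ih (ModuleCat.of R (QuotSMulTop x M)) ?_ ?_
      · have := supportDim_quotSMulTop_succ_eq_supportDim reg hx
        rw [← this] at hd
        change supportDim R (QuotSMulTop x M) ≤ _
        exact (ENat.WithBot.add_le_add_one_right_iff).1 (by exact_mod_cast hd)
      · intro i hi
        cases i with
        | zero => exact ctr30 hS Y (hM 0 (by omega))
        | succ i => exact ctr3 hS Y i (hM i (by omega)) (hM (i+1) (by omega))
    · exact emb n Y M hn (hM n (by omega)) h0

theorem bassC (d : ℕ) (hd : ringKrullDim R = d) (n : ℕ) (hdn : d < n)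
    (hn : ∀ N : ModuleCat.{u} R, Module.Finite R N →
      Subsingleton (Ext.{u} N (ModuleCat.of R R) (n+1)))
    (N : ModuleCat.{u} R) (hN : Module.Finite R N) :
    Subsingleton (Ext.{u} N (ModuleCat.of R R) n) := by
  have hk : Subsingleton (Ext.{u} (ModuleCat.of R (ResidueField R)) (ModuleCat.of R R) n) := by
    refine bassB n _ hn d (ModuleCat.of R R) ?_ ?_
    · change supportDim R R ≤ _
      rw [supportDim_self_eq_ringKrullDim, hd]
    · intro i hi
      have : CategoryTheory.Projective (ModuleCat.of R R) :=
        (IsProjective.iff_projective (R := R) R).1 inferInstance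
      obtain ⟨j, rfl⟩ : ∃ j, i = j + 1 := ⟨i - 1, by omega⟩
      exact Ext.subsingleton_of_projective _ _ _
  have key := IsNoetherianRing.induction_on_isQuotientEquivQuotientPrime R (M := N) hN
    (motive := fun N _ _ _ => Subsingleton (Ext.{u} (ModuleCat.of R N) (ModuleCat.of R R) n))
    ?_ ?_ ?_
  · exact key
  · intro N _ _ _ _
    have : CategoryTheory.Projective (ModuleCat.of R N) := (IsProjective.iff_projective (R := R) N).1 inferInstance
    obtain ⟨j, rfl⟩ : ∃ j, n = j + 1 := ⟨n - 1, by omega⟩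
    exact Ext.subsingleton_of_projective _ _ _
  · intro N _ _ _ p e
    by_cases hp : p.1 = maximalIdeal R
    · have e' : N ≃ₗ[R] ResidueField R := e.trans (Submodule.quotEquivOfEq _ _ hp)
      have hS := ses (0 : PUnit.{u+1} →ₗ[R] N) e'.toLinearMap (Function.injective_of_subsingleton _)
        e'.surjective (by
          intro y
          change e' y = 0 ↔ ∃ z, (0 : PUnit.{u+1} →ₗ[R] N) z = y
          simp only [LinearMap.zero_apply, exists_const, map_eq_zero_iff e' e'.injective]
          exact eq_comm)
      refine ctr2 hS _ n ?_ hk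
      have : CategoryTheory.Projective (ModuleCat.of R PUnit.{u+1}) :=
        (IsProjective.iff_projective (R := R) PUnit.{u+1}).1 inferInstance
      obtain ⟨j, rfl⟩ : ∃ j, n = j + 1 := ⟨n - 1, by omega⟩
      exact Ext.subsingleton_of_projective (ModuleCat.of R PUnit.{u+1}) _ _
    · have hlt : p.1 < maximalIdeal R :=
        lt_of_le_of_ne (le_maximalIdeal p.2.ne_top) hp
      obtain ⟨x, hx, hxp⟩ := SetLike.exists_of_lt hlt
      refine naka (ModuleCat.of R N) (ModuleCat.of R R) x hx ?_ n (hn _ ?_)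
      · change IsSMulRegular N x
        rw [e.isSMulRegular_congr]
        have : IsDomain (R ⧸ p.1) := inferInstance
        intro a b hab
        obtain ⟨a, rfl⟩ := Ideal.Quotient.mk_surjective a
        obtain ⟨b, rfl⟩ := Ideal.Quotient.mk_surjective b
        have hab' : Ideal.Quotient.mk p.1 (x * a) = Ideal.Quotient.mk p.1 (x * b) := hab
        rw [Ideal.Quotient.eq, ← mul_sub] at hab'
        rw [Ideal.Quotient.eq]
        exact (p.2.mem_or_mem hab').resolve_left hxp
      · exact inferInstanceAs (Module.Finite R (QuotSMulTop x N))
  · intro N₁ _ _ _ N₂ _ _ _ N₃ _ _ _ f g hf hg hfg h1 h3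
    exact ctr2 (ses f g hf hg hfg) _ n h1 h3

theorem bassD (d : ℕ) (hd : ringKrullDim R = d) (hG : IsGorensteinLocalRing R) (n : ℕ) (hdn : d < n)
    (N : ModuleCat.{u} R) (hN : Module.Finite R N) :
    Subsingleton (Ext.{u} N (ModuleCat.of R R) n) := by
  obtain ⟨n0, h0⟩ := hG
  have : ∀ k n, d < n → n0 < n + k → ∀ N : ModuleCat.{u} R, Module.Finite R N →
      Subsingleton (Ext.{u} N (ModuleCat.of R R) n) := by
    intro k
    induction k with
    | zero => intro n _ hn N hN; exact (bridge R n N _).1 (h0 N hN n hn)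
    | succ k ih =>
      intro n hn hk
      exact bassC d hd n hn (ih (n+1) (by omega) (by omega))
  exact this (n0+1) n hdn (by omega) N hN

theorem bassE (d : ℕ) (hd : ringKrullDim R = d) (hG : IsGorensteinLocalRing R) (t : ℕ) :
    ∀ (M : ModuleCat.{u} R) [Module.Finite R M],
    (∀ j < t, Subsingleton (Ext.{u} (ModuleCat.of R (ResidueField R)) M j)) →
    ∀ i, d < i + t → Subsingleton (Ext.{u} M (ModuleCat.of R R) i) := by
  induction t with
  | zero => intro M hM _ i hi; exact bassD d hd hG i hi M hM
  | succ t ih =>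
    intro M _ h i hi
    obtain ⟨x, hx, reg⟩ := exists_reg M (h 0 (by omega))
    have hS := reg.smulShortComplex_shortExact
    refine naka M _ x hx reg i (ih _ ?_ (i+1) (by omega))
    intro j hj
    exact cov3 hS _ j (h j (by omega)) (h (j+1) (by omega))

theorem mcm (d : ℕ) (hd : ringKrullDim R = d) (M : ModuleCat.{u} R) (h : IsMCM R M) (j : ℕ)
    (hj : j < d) : Subsingleton (Ext.{u} (ModuleCat.of R (ResidueField R)) M j) := by
  rw [← bridge]
  by_contra hc
  have h1 : moduleDepth R M ≤ j := sInf_le ⟨j, hc, rfl⟩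
  rw [IsMCM, hd] at h
  have h2 : (d : ℕ∞) ≤ moduleDepth R M := by exact_mod_cast h
  have h3 : d ≤ j := by exact_mod_cast h2.trans h1
  omega

theorem approx (d : ℕ) (hd : ringKrullDim R = d) (hG : IsGorensteinLocalRing R) (x : R)
    (hx : x ∈ nonZeroDivisors R) (W : ModuleCat.{u} R) [Module.Finite R W] (hW : IsMCM R W)
    (g : W →ₗ[R] (R ⧸ Ideal.span {x})) :
    ∃ h : W →ₗ[R] R, (Ideal.span {x}).mkQ ∘ₗ h = g := by
  have hE := bassE d hd hG d W (mcm d hd W hW) 1 (by omega)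
  have hS := ses (LinearMap.lsmul R R x) (Ideal.span {x}).mkQ
    (by
      intro a b hab
      exact (Module.Flat.isSMulRegular_of_nonZeroDivisors hx : IsSMulRegular R x) hab)
    (Submodule.mkQ_surjective _)
    (by
      intro y
      rw [Submodule.mkQ_apply, Submodule.Quotient.mk_eq_zero, Ideal.mem_span_singleton']
      simp [mul_comm])
  obtain ⟨b, hb⟩ := Ext.covariant_sequence_exact₃ W hS
    (Ext.mk₀ (ModuleCat.ofHom g : W ⟶ ModuleCat.of R (R ⧸ Ideal.span {x}))) rfl
    (@Subsingleton.elim _ hE _ _)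
  obtain ⟨f, rfl⟩ := (Ext.mk₀_bijective _ _).2 b
  rw [Ext.mk₀_comp_mk₀, (Ext.mk₀_bijective _ _).1.eq_iff] at hb
  exact ⟨f.hom, congrArg ModuleCat.Hom.hom hb⟩

end helpers


/-- Over a Gorenstein local ring of positive dimension, a resolving
subcategory all of whose members are maximal Cohen–Macaulay is not contravariantly
infinite: `R/(x)` for any `R`-regular `x ∈ 𝔪` lies outside `𝒳` and admits a right
`𝒳`-approximation. -/
theorem stmt2 (R : Type u) [CommRing R] [IsNoetherianRing R] [IsLocalRing R]
    (hG : IsGorensteinLocalRing R) (hdim : 0 < ringKrullDim R)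
    (𝒳 : Set (ModuleCat.{u} R)) (h𝒳 : IsResolving R 𝒳) (hMCM : ∀ M ∈ 𝒳, IsMCM R M) :
    ¬ ContravariantlyInfinite R 𝒳 ∧
      ∀ x ∈ maximalIdeal R, x ∈ nonZeroDivisors R →
        ModuleCat.of R (R ⧸ Ideal.span {x}) ∉ 𝒳 ∧
          HasRightApprox R 𝒳 (ModuleCat.of R (R ⧸ Ideal.span {x})) := by
  obtain ⟨d, hd⟩ : ∃ d : ℕ, ringKrullDim R = d := by
    obtain ⟨a, ha⟩ := WithBot.ne_bot_iff_exists.1 (ringKrullDim_ne_bot (R := R))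
    have ht := ringKrullDim_ne_top (R := R)
    cases a with
    | top => exact absurd ha.symm ht
    | coe a => exact ⟨a, ha.symm⟩
  have hd0 : 0 < d := by rw [hd] at hdim; exact_mod_cast hdim
  have hR : ModuleCat.of R R ∈ 𝒳 := h𝒳.freeMem _
    (inferInstanceAs (Module.Finite R R)) (inferInstanceAs (Module.Free R R))
  have main : ∀ x ∈ maximalIdeal R, x ∈ nonZeroDivisors R →
        ModuleCat.of R (R ⧸ Ideal.span {x}) ∉ 𝒳 ∧
          HasRightApprox R 𝒳 (ModuleCat.of R (R ⧸ Ideal.span {x})) := by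
    intro x hxm hx
    refine ⟨fun hmem => ?_, ModuleCat.of R R, (Ideal.span {x}).mkQ, hR, ?_⟩
    · have : Nontrivial (R ⧸ Ideal.span {x}) := Ideal.Quotient.nontrivial_iff.2 (by
        rw [Ne, Ideal.span_singleton_eq_top]
        exact (IsLocalRing.mem_maximalIdeal x).1 hxm)
      have h1 : (d : WithBot ℕ∞) ≤ Module.supportDim R (R ⧸ Ideal.span {x}) :=
        depth_le (ModuleCat.of R (R ⧸ Ideal.span {x})) d (mcm d hd _ (hMCM _ hmem))
      rw [Module.supportDim_quotient_eq_ringKrullDim] at h1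
      have h2 := ringKrullDim_quotient_span_singleton_succ_eq_ringKrullDim_of_mem_nonZeroDivisors
        hx hxm
      rw [hd] at h2
      have h3 : (d : WithBot ℕ∞) + 1 ≤ d := h2 ▸ add_le_add_left h1 1
      have h4 : d + 1 ≤ d := by exact_mod_cast h3
      omega
    · intro W hW g
      have := h𝒳.finite W hW
      exact approx d hd hG x hx W (hMCM W hW) g
  refine ⟨fun hinf => ?_, main⟩
  obtain ⟨x, hxm, hx⟩ := exists_reg (ModuleCat.of R R) (mcm d hd _ (hMCM _ hR) 0 hd0)
  have hx' : x ∈ nonZeroDivisors R := by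
    rw [mem_nonZeroDivisors_iff_left]
    intro y hy
    exact hx (by simpa using hy)
  obtain ⟨h1, h2⟩ := main x hxm hx'
  exact hinf _ (inferInstanceAs (Module.Finite R (R ⧸ Ideal.span {x}))) h1 h2
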